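/- Let G be a finitely generated virtually free group with generating set {s₁,…,sₙ}. There exists a universal first-order formula θ(x₁,…,xₙ) in the language of groups with n free variables such that for every group endomorphism φ of G, the sentence θ(φ(s₁),…,φ(sₙ)) is satisfied by G if and only if φ is class-permuting. -/

import Mathlib

open FirstOrder Language

/-- Function symbols of the first-order language of groups:
a binary multiplication, a unary inverse and a constant for the identity. -/
inductive GroupFunc : ℕ → Type
  | mul : GroupFunc 2
  | inv : GroupFunc 1
  | one : GroupFunc 0

/-- The first-order language of groups. -/
def groupLang : FirstOrder.Language :=
  { Functions := GroupFunc
    Relations := fun _ => Empty }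

/-- Every group is a structure for the language of groups in the natural way. -/
instance groupLangStructure (G : Type*) [Group G] : groupLang.Structure G where
  funMap {n} f v :=
    match f with
    | .mul => v 0 * v 1
    | .inv => (v 0)⁻¹
    | .one => 1
  RelMap {n} r _ := r.elim

/-- Existential formulas: iterated existential quantifications of a
quantifier-free formula. -/
inductive IsExistentialQF {α : Type*} : ∀ {n : ℕ}, groupLang.BoundedFormula α n → Prop
  | of_isQF {n : ℕ} {φ : groupLang.BoundedFormula α n} (h : φ.IsQF) : IsExistentialQF φ
  | ex {n : ℕ} {φ : groupLang.BoundedFormula α (n + 1)} (h : IsExistentialQF φ) :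
      IsExistentialQF φ.ex

/-- Universal formulas: iterated universal quantifications of a
quantifier-free formula. -/
inductive IsUniversalQF {α : Type*} : ∀ {n : ℕ}, groupLang.BoundedFormula α n → Prop
  | of_isQF {n : ℕ} {φ : groupLang.BoundedFormula α n} (h : φ.IsQF) : IsUniversalQF φ
  | all {n : ℕ} {φ : groupLang.BoundedFormula α (n + 1)} (h : IsUniversalQF φ) :
      IsUniversalQF φ.all

/-- ∀∃-formulas: iterated universal quantifications of an existential formula. -/
inductive IsAE {α : Type*} : ∀ {n : ℕ}, groupLang.BoundedFormula α n → Prop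
  | of_existential {n : ℕ} {φ : groupLang.BoundedFormula α n} (h : IsExistentialQF φ) : IsAE φ
  | all {n : ℕ} {φ : groupLang.BoundedFormula α (n + 1)} (h : IsAE φ) : IsAE φ.all

/-- A group is virtually free if it has a free subgroup of finite index. -/
def VirtuallyFree (G : Type*) [Group G] : Prop :=
  ∃ H : Subgroup G, H.FiniteIndex ∧ Nonempty (IsFreeGroup H)

/-- A group is co-Hopfian if every injective endomorphism is surjective. -/
def CoHopfian (G : Type*) [Group G] : Prop :=
  ∀ φ : G →* G, Function.Injective φ → Function.Surjective φ

/-- Two homomorphisms `φ, φ' : G → G'` are equivalent if they coincide up to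
conjugation on every finite subgroup of `G`. -/
def HomEquiv {G G' : Type*} [Group G] [Group G'] (φ φ' : G →* G') : Prop :=
  ∀ H : Subgroup G, (H : Set G).Finite →
    ∃ g' : G', ∀ h ∈ H, φ' h = g' * φ h * g'⁻¹

/-- Two groups are ∀∃-equivalent if they satisfy the same ∀∃-sentences. -/
def AEEquivalent (G : Type*) (G' : Type*) [Group G] [Group G'] : Prop :=
  ∀ φ : groupLang.Sentence, IsAE φ → (G ⊨ φ ↔ G' ⊨ φ)

/-- Two groups are ∃-equivalent if they satisfy the same existential sentences. -/
def ExistentiallyEquivalent (G : Type*) (G' : Type*) [Group G] [Group G'] : Prop :=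
  ∀ φ : groupLang.Sentence, IsExistentialQF φ → (G ⊨ φ ↔ G' ⊨ φ)

/-- An endomorphism is rigid-testing: `G` is rigid if every endomorphism
equivalent to the identity is an automorphism. -/
def Rigid (G : Type*) [Group G] : Prop :=
  ∀ φ : G →* G, HomEquiv φ (MonoidHom.id G) → Function.Bijective φ

/-- `Out G` is finite, expressed as: the inner automorphisms form a finite index
subgroup of `Aut G`. -/
def OutFinite (G : Type*) [Group G] : Prop :=
  (MulAut.conj : G →* MulAut G).range.FiniteIndex

/-- Iterated composition of an endomorphism. -/
def homPow {G : Type*} [Group G] (φ : G →* G) : ℕ → (G →* G)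
  | 0 => MonoidHom.id G
  | n + 1 => φ.comp (homPow φ n)

/-- An endomorphism `φ` of `G` is class-permuting if some positive power of `φ`
is equivalent to the identity of `G`. -/
def ClassPermuting {G : Type*} [Group G] (φ : G →* G) : Prop :=
  ∃ n : ℕ, 1 ≤ n ∧ HomEquiv (homPow φ n) (MonoidHom.id G)

/-- A maximal finite subgroup: a finite subgroup maximal with respect to
inclusion among finite subgroups. -/
def MaximalFiniteSubgroup {G : Type*} [Group G] (A : Subgroup G) : Prop :=
  (A : Set G).Finite ∧ ∀ B : Subgroup G, (B : Set G).Finite → A ≤ B → A = B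

/-- Two subgroups are conjugate. -/
def SubgroupConj {G : Type*} [Group G] (A B : Subgroup G) : Prop :=
  ∃ g : G, B = A.map (MulAut.conj g).toMonoidHom

/-- A group is strongly co-Hopfian if there is a finite subset `F` of
`G \ {1}` such that every endomorphism whose kernel misses `F` is an
automorphism. -/
def StronglyCoHopfian (G : Type*) [Group G] : Prop :=
  ∃ F : Finset G, (1 : G) ∉ F ∧
    ∀ φ : G →* G, (∀ f ∈ F, φ f ≠ 1) → Function.Bijective φ

/-- A group is finitely presented. -/
def GroupFinitelyPresented (G : Type*) [Group G] : Prop :=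
  ∃ (n : ℕ) (rels : Finset (FreeGroup (Fin n))),
    Nonempty (PresentedGroup (rels : Set (FreeGroup (Fin n))) ≃* G)

/-!
A finitely generated virtually free group is quasi-isometric to a tree, so its Cayley graphs have
coarse midpoints. Hence every finite subgroup has a coarse circumcenter, and conjugating by it moves
the subgroup into a fixed ball: there are only finitely many conjugacy classes of finite subgroups.
In particular, for finite `A` there are only finitely many homomorphisms `A →* G` up to conjugation.

An endomorphism `φ` acts on these finite sets by composition, and it is class-permuting if and only
if it acts injectively whenever `A` is one of finitely many representatives. This says that `φ`
keeps finitely many pairs of non-conjugate tuples non-conjugate. Since the entries of these tuples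
are words in the generators, it is a universal condition on the images of the generators.
-/

section CoarseMidpoints

open SimpleGraph

variable {V W : Type*}

/-- A coarse form of the midpoint inequality in trees and `CAT(0)` spaces; it is doubled
throughout so as to avoid halving in `ℕ`. -/
def HasCoarseMidpoints (Γ : SimpleGraph V) (C : ℕ) : Prop :=
  ∀ x y, ∃ m, ∀ z, 2 * Γ.dist z m + Γ.dist x y ≤ 2 * max (Γ.dist z x) (Γ.dist z y) + C

/-- A vertex minimizing the distance to the farthest point of an orbit is a coarse circumcenter
of that orbit, and the midpoint inequality makes it coarsely unique. -/
theorem HasCoarseMidpoints.exists_dist_smul_le {Γ : SimpleGraph V} {C : ℕ}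
    (hΓ : HasCoarseMidpoints Γ C) [Nonempty V] {K : Type*} [Group K] [Finite K] [MulAction K V]
    (hK : ∀ (k : K) (u v : V), Γ.dist (k • u) (k • v) = Γ.dist u v) :
    ∃ c, ∀ k : K, Γ.dist c (k • c) ≤ C := by
  have := Fintype.ofFinite K
  obtain ⟨o⟩ := ‹Nonempty V›
  let radius (v : V) : ℕ := Finset.univ.sup fun k : K => Γ.dist (k • o) v
  have dist_le_radius (k : K) (v : V) : Γ.dist (k • o) v ≤ radius v :=
    Finset.le_sup (f := fun k : K => Γ.dist (k • o) v) (Finset.mem_univ k)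
  let c := Function.argmin radius
  refine ⟨c, fun k => ?_⟩
  obtain ⟨m, hm⟩ := hΓ c (k • c)
  obtain ⟨l, -, hl⟩ := Finset.exists_mem_eq_sup Finset.univ Finset.univ_nonempty
    fun l : K => Γ.dist (l • o) m
  have hmin : radius c ≤ Γ.dist (l • o) m := hl ▸ Function.argmin_le radius m
  have hkc : Γ.dist (l • o) (k • c) ≤ radius c := by
    rw [← hK k⁻¹, inv_smul_smul, smul_smul]
    exact dist_le_radius _ c
  have := hm (l • o)
  have := dist_le_radius l c
  omega

theorem dist_map_le_mul_dist {Γ : SimpleGraph V} {T : SimpleGraph W} (hΓ : Γ.Connected)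
    (hT : T.Connected) {h : W → V} {M : ℕ} (hh : ∀ a b, T.Adj a b → Γ.dist (h a) (h b) ≤ M)
    (a b : W) : Γ.dist (h a) (h b) ≤ M * T.dist a b := by
  obtain ⟨p, hp⟩ := hT.exists_walk_length_eq_dist a b
  rw [← hp]
  clear hp
  induction p with
  | nil => simp
  | @cons u v w huv p ih =>
    calc Γ.dist (h u) (h w) ≤ Γ.dist (h u) (h v) + Γ.dist (h v) (h w) := hΓ.dist_triangle
      _ ≤ M + M * p.length := add_le_add (hh u v huv) ih
      _ = M * (p.length + 1) := by ring

theorem dist_add_dist_of_mem_support {Γ : SimpleGraph V} {x y u : V} {p : Γ.Walk x y}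
    (hp : p.length = Γ.dist x y) (hu : u ∈ p.support) :
    Γ.dist x u + Γ.dist u y ≤ Γ.dist x y := by
  obtain ⟨q, r, rfl⟩ := Walk.mem_support_iff_exists_append.mp hu
  rw [← hp, Walk.length_append]
  exact add_le_add (dist_le q) (dist_le r)

theorem support_subset_support_of_isAcyclic {T : SimpleGraph W} (hT : T.IsAcyclic) {a b : W}
    {p : T.Walk a b} (hp : p.IsPath) (q : T.Walk a b) : p.support ⊆ q.support := by
  classical
  have hpq : p = q.bypass :=
    congrArg Subtype.val ((hT.subsingleton_path a b).elim ⟨p, hp⟩ ⟨q.bypass, q.bypass_isPath⟩)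
  exact hpq ▸ q.support_bypass_subset_support

theorem exists_walk_map_near {Γ : SimpleGraph V} {T : SimpleGraph W} (hT : T.Connected)
    {f : V → W} {L : ℕ} (hf : ∀ u v, Γ.Adj u v → T.dist (f u) (f v) ≤ L) {x y : V}
    (p : Γ.Walk x y) :
    ∃ q : T.Walk (f x) (f y), ∀ a ∈ q.support, ∃ u ∈ p.support, T.dist (f u) a ≤ L := by
  induction p with
  | nil => exact ⟨.nil, by simp⟩
  | @cons u v w huv p ih =>
    obtain ⟨q, hq⟩ := ih
    obtain ⟨r, hr⟩ := hT.exists_walk_length_eq_dist (f u) (f v)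
    refine ⟨r.append q, fun a ha => ?_⟩
    rw [Walk.support_cons]
    rcases (Walk.mem_support_append_iff r q).mp ha with har | haq
    · refine ⟨u, List.mem_cons_self, ?_⟩
      have := dist_add_dist_of_mem_support hr har
      have := hf u v huv
      omega
    · obtain ⟨u', hu', hdist⟩ := hq a haq
      exact ⟨u', List.mem_cons_of_mem _ hu', hdist⟩

/-- Along the image of `p`, the difference of the distances to `x` and `y` changes sign. -/
theorem exists_balanced_mem_support {Γ : SimpleGraph V} {T : SimpleGraph W} (hΓ : Γ.Connected)
    {h : W → V} {M : ℕ} (hh : ∀ a b, T.Adj a b → Γ.dist (h a) (h b) ≤ M) {x y : V} {a b : W}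
    (hx : Γ.dist x (h a) ≤ M) (hy : Γ.dist y (h b) ≤ M) (p : T.Walk a b) :
    ∃ c ∈ p.support, Γ.dist x y ≤ 2 * Γ.dist x (h c) + 2 * M ∧
      Γ.dist x y ≤ 2 * Γ.dist y (h c) + 2 * M := by
  have triangle (c : W) : Γ.dist x y ≤ Γ.dist x (h c) + Γ.dist y (h c) := by
    rw [Γ.dist_comm (u := y)]
    exact hΓ.dist_triangle
  by_cases ha : Γ.dist x (h a) < Γ.dist y (h a)
  swap
  · have := triangle a
    exact ⟨a, p.start_mem_support, by omega, by omega⟩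
  by_cases hb : Γ.dist x (h b) < Γ.dist y (h b)
  · have := triangle b
    exact ⟨b, p.end_mem_support, by omega, by omega⟩
  obtain ⟨d, hd, hfst, hsnd⟩ :=
    p.exists_boundary_dart {c | Γ.dist x (h c) < Γ.dist y (h c)} ha hb
  simp only [Set.mem_ofPred_eq] at hfst hsnd
  have hstep : Γ.dist x (h d.snd) ≤ Γ.dist x (h d.fst) + M :=
    hΓ.dist_triangle.trans (Nat.add_le_add_left (hh _ _ d.adj) _)
  have := triangle d.fst
  have := triangle d.snd
  exact ⟨d.fst, p.dart_fst_mem_support_of_mem_darts hd, by omega, by omega⟩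

/-- The midpoint is the image of a balanced point of the path from `f x` to `f y`. The images of
the geodesics `x → z` and `z → y` cannot avoid that path, so one of them passes near `m`. -/
theorem hasCoarseMidpoints_of_isTree {Γ : SimpleGraph V} {T : SimpleGraph W} (hΓ : Γ.Connected)
    (hT : T.IsTree) {f : V → W} {h : W → V} {L M : ℕ}
    (hf : ∀ u v, Γ.Adj u v → T.dist (f u) (f v) ≤ L)
    (hh : ∀ a b, T.Adj a b → Γ.dist (h a) (h b) ≤ M) (hhf : ∀ v, Γ.dist v (h (f v)) ≤ M) :
    HasCoarseMidpoints Γ (4 * (M + M * L) + 2 * M) := by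
  intro x y
  obtain ⟨p, hp⟩ := hT.connected.exists_isPath (f x) (f y)
  obtain ⟨c, hcp, hcx, hcy⟩ := exists_balanced_mem_support hΓ hh (hhf x) (hhf y) p
  refine ⟨h c, fun z => ?_⟩
  have near {x' y' : V} {w : Γ.Walk x' y'} (hw : w.length = Γ.dist x' y')
      (hu : ∃ u ∈ w.support, T.dist (f u) c ≤ L) :
      Γ.dist x' (h c) + Γ.dist (h c) y' ≤ Γ.dist x' y' + 2 * (M + M * L) := by
    obtain ⟨u, huw, huc⟩ := hu
    have huc' : Γ.dist u (h c) ≤ M + M * L :=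
      calc Γ.dist u (h c) ≤ Γ.dist u (h (f u)) + Γ.dist (h (f u)) (h c) := hΓ.dist_triangle
        _ ≤ M + M * L := add_le_add (hhf u) <|
          (dist_map_le_mul_dist hΓ hT.connected hh _ _).trans (Nat.mul_le_mul_left M huc)
    have := dist_add_dist_of_mem_support hw huw
    have := hΓ.dist_triangle (u := x') (v := u) (w := h c)
    have := hΓ.dist_triangle (u := h c) (v := u) (w := y')
    have := Γ.dist_comm (u := u) (v := h c)
    omega
  obtain ⟨w₁, hw₁⟩ := hΓ.exists_walk_length_eq_dist x z
  obtain ⟨w₂, hw₂⟩ := hΓ.exists_walk_length_eq_dist z y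
  obtain ⟨q, hq⟩ := exists_walk_map_near hT.connected hf (w₁.append w₂)
  obtain ⟨u, hu, huc⟩ := hq c (support_subset_support_of_isAcyclic hT.isAcyclic hp q hcp)
  have := Γ.dist_comm (u := z) (v := x)
  have := Γ.dist_comm (u := z) (v := h c)
  have := Γ.dist_comm (u := y) (v := h c)
  rcases (Walk.mem_support_append_iff w₁ w₂).mp hu with hu₁ | hu₂
  · have := near hw₁ ⟨u, hu₁, huc⟩
    omega
  · have := near hw₂ ⟨u, hu₂, huc⟩
    omega

theorem finite_setOf_dist_le {Γ : SimpleGraph V} (hΓ : Γ.Connected)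
    (hfin : ∀ v, (Γ.neighborSet v).Finite) (n : ℕ) (v : V) : {w | Γ.dist v w ≤ n}.Finite := by
  induction n generalizing v with
  | zero => simp [hΓ.dist_eq_zero_iff]
  | succ n ih =>
    refine ((Set.finite_singleton v).union ((hfin v).biUnion fun u _ => ih u)).subset
      fun w (hw : Γ.dist v w ≤ n + 1) => ?_
    obtain ⟨p, hp⟩ := hΓ.exists_walk_length_eq_dist v w
    cases p with
    | nil => exact .inl rfl
    | cons huv q =>
      have hq : q.length ≤ n := Nat.le_of_succ_le_succ (hp.trans_le hw)
      exact .inr (Set.mem_biUnion huv ((dist_le q).trans hq))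

end CoarseMidpoints

section CayleyGraphs

open SimpleGraph

variable {G : Type*} [Group G] {S : Set G}

theorem mulCayley_reachable_mul_of_mem {s : G} (hs : s ∈ S) (g : G) :
    (mulCayley S).Reachable g (g * s) := by
  by_cases hg : g = g * s
  · exact hg ▸ .refl g
  · exact ((mulCayley_adj S _ _).mpr ⟨hg, .inl (by rwa [inv_mul_cancel_left])⟩).reachable

theorem mulCayley_connected (hS : Subgroup.closure S = ⊤) : (mulCayley S).Connected := by
  have reachable_one (g : G) : (mulCayley S).Reachable 1 g := by
    induction (hS ▸ Subgroup.mem_top g : g ∈ Subgroup.closure S)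
      using Subgroup.closure_induction_right with
    | one => exact .refl 1
    | mul_right g _ s hs ih => exact ih.trans (mulCayley_reachable_mul_of_mem hs g)
    | mul_inv_cancel g _ s hs ih =>
      refine ih.trans (Reachable.symm ?_)
      simpa using mulCayley_reachable_mul_of_mem hs (g * s⁻¹)
  exact ⟨fun u v => (reachable_one u).symm.trans (reachable_one v)⟩

theorem mulCayley_dist_mul_left_le (hS : (mulCayley S).Connected) (g u v : G) :
    (mulCayley S).dist (g * u) (g * v) ≤ (mulCayley S).dist u v := by
  let leftMul : mulCayley S →g mulCayley S := ⟨(g * ·), mulCayley_adj_mul_iff_right.mpr⟩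
  obtain ⟨p, hp⟩ := hS.exists_walk_length_eq_dist u v
  rw [← hp, ← Walk.length_map leftMul p]
  exact dist_le (p.map leftMul)

theorem mulCayley_dist_mul_left (hS : (mulCayley S).Connected) (g u v : G) :
    (mulCayley S).dist (g * u) (g * v) = (mulCayley S).dist u v :=
  (mulCayley_dist_mul_left_le hS g u v).antisymm <| by
    simpa using mulCayley_dist_mul_left_le hS g⁻¹ (g * u) (g * v)

theorem exists_mulCayley_dist_le (hS : (mulCayley S).Connected) {R : Set G} (hR : R.Finite) :
    ∃ N, ∀ u v, u⁻¹ * v ∈ R → (mulCayley S).dist u v ≤ N := by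
  obtain ⟨N, hN⟩ := (hR.image ((mulCayley S).dist 1)).bddAbove
  refine ⟨N, fun u v huv => ?_⟩
  rw [← mulCayley_dist_mul_left hS u⁻¹, inv_mul_cancel]
  exact hN ⟨_, huv, rfl⟩

theorem inv_mul_mem_of_mulCayley_adj {u v : G} (huv : (mulCayley S).Adj u v) :
    u⁻¹ * v ∈ S ∪ S⁻¹ := by
  simpa using ((mulCayley_adj S u v).mp huv).2

theorem mulCayley_neighborSet_finite (hS : S.Finite) (g : G) :
    ((mulCayley S).neighborSet g).Finite :=
  ((hS.union hS.inv).image (g * ·)).subset fun u hu =>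
    ⟨g⁻¹ * u, inv_mul_mem_of_mulCayley_adj hu, mul_inv_cancel_left g u⟩

end CayleyGraphs

section FiniteSubgroupClasses

open SimpleGraph

variable {G : Type*} [Group G]

/-- A finite set of finite subgroups of `G` that meets every conjugacy class of finite subgroups;
it reduces questions about all finite subgroups to finitely many. -/
structure IsFiniteSubgroupSystem (𝓚 : Set (Subgroup G)) : Prop where
  finite : 𝓚.Finite
  finite_of_mem : ∀ A ∈ 𝓚, (A : Set G).Finite
  exists_subgroupConj : ∀ K : Subgroup G, (K : Set G).Finite → ∃ A ∈ 𝓚, SubgroupConj A K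

/-- Conjugating by a coarse circumcenter of a finite subgroup moves it into a ball about `1`. -/
theorem exists_isFiniteSubgroupSystem_of_hasCoarseMidpoints {S : Set G} (hfin : S.Finite)
    (hS : Subgroup.closure S = ⊤) {C : ℕ} (hC : HasCoarseMidpoints (mulCayley S) C) :
    ∃ 𝓚 : Set (Subgroup G), IsFiniteSubgroupSystem 𝓚 := by
  have hconn := mulCayley_connected hS
  have hball := finite_setOf_dist_le hconn (mulCayley_neighborSet_finite hfin) C 1
  refine ⟨{A | (A : Set G) ⊆ {g | (mulCayley S).dist 1 g ≤ C}},
    hball.finite_subsets.preimage SetLike.coe_injective.injOn,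
    fun A hA => hball.subset hA, fun K hK => ?_⟩
  have : Finite K := hK
  obtain ⟨c, hc⟩ := hC.exists_dist_smul_le (K := K)
    fun k u v => mulCayley_dist_mul_left hconn (k : G) u v
  refine ⟨K.map (MulAut.conj c⁻¹).toMonoidHom, ?_, c, ?_⟩
  · rintro _ ⟨k, hk, rfl⟩
    rw [Set.mem_ofPred_eq, ← mulCayley_dist_mul_left hconn c]
    simpa [mul_assoc] using hc ⟨k, hk⟩
  · ext g
    simp [Subgroup.mem_map, mul_assoc]

end FiniteSubgroupClasses

section FreeGroups

open SimpleGraph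

variable {X : Type*}

theorem finite_of_freeGroup_fg (hX : Group.FG (FreeGroup X)) : Finite X := by
  have : Group.FG (Abelianization (FreeGroup X)) :=
    Group.fg_of_surjective (f := Abelianization.of) (QuotientGroup.mk'_surjective _)
  have : Module.Finite ℤ (FreeAbelianGroup X) :=
    Module.Finite.iff_addGroup_fg.mpr (GroupFG.iff_add_fg.mp this)
  exact Module.Finite.finite_basis (FreeAbelianGroup.basis X)

/-- The Fox derivative along the generator `x`, as a homomorphism to a wreath product: the function
`(foxDerivative x w).left` records the signed number of times that the path labelled `w` from `1`
in the Cayley graph crosses each edge `{v, v * of x}`. -/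
def foxDerivative [DecidableEq X] (x : X) :
    FreeGroup X →* (FreeGroup X → Multiplicative ℤ) ⋊[mulAutArrow] FreeGroup X :=
  FreeGroup.lift fun y => ⟨if y = x then Pi.mulSingle 1 (.ofAdd 1) else 1, .of y⟩

theorem foxDerivative_right [DecidableEq X] (x : X) (w : FreeGroup X) :
    (foxDerivative x w).right = w :=
  DFunLike.congr_fun (FreeGroup.ext_hom (SemidirectProduct.rightHom.comp (foxDerivative x))
    (MonoidHom.id _) fun y => by simp [foxDerivative]) w

theorem foxDerivative_mul_of_left_apply [DecidableEq X] (x y : X) (w v : FreeGroup X) :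
    (foxDerivative x (w * .of y)).left v =
      (foxDerivative x w).left v * if y = x ∧ w = v then .ofAdd 1 else 1 := by
  rw [map_mul, SemidirectProduct.mul_left, foxDerivative_right, Pi.mul_apply]
  congr 1
  change (foxDerivative x (.of y)).left (w⁻¹ * v) = _
  by_cases hyx : y = x <;> simp [foxDerivative, hyx, Pi.mulSingle_apply, inv_mul_eq_one]

/-- The Fox derivative along `x`, evaluated at `v`, is constant along every edge other than
`{v, v * of x}`, but it takes different values at the ends of this one. -/
theorem mulCayley_range_of_not_reachable_deleteEdges (v : FreeGroup X) (x : X) :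
    ¬ ((mulCayley (Set.range .of)).deleteEdges {s(v, v * .of x)}).Reachable v (v * .of x) := by
  classical
  let coeff (w : FreeGroup X) : Multiplicative ℤ := (foxDerivative x w).left v
  have coeff_eq_of_edge_ne {w : FreeGroup X} {y : X} (hne : s(w, w * .of y) ≠ s(v, v * .of x)) :
      coeff (w * .of y) = coeff w := by
    dsimp only [coeff]
    rw [foxDerivative_mul_of_left_apply, if_neg (by rintro ⟨rfl, rfl⟩; exact hne rfl), mul_one]
  have coeff_eq_of_adj {a b : FreeGroup X}
      (hab : ((mulCayley (Set.range .of)).deleteEdges {s(v, v * .of x)}).Adj a b) :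
      coeff a = coeff b := by
    obtain ⟨hadj, hne⟩ := deleteEdges_adj.mp hab
    rcases ((mulCayley_adj _ a b).mp hadj).2 with ⟨y, hy⟩ | ⟨y, hy⟩
    · obtain rfl : a * .of y = b := hy ▸ mul_inv_cancel_left a b
      exact (coeff_eq_of_edge_ne hne).symm
    · obtain rfl : b * .of y = a := hy ▸ mul_inv_cancel_left b a
      exact coeff_eq_of_edge_ne (Sym2.eq_swap ▸ hne)
  have coeff_eq_of_walk {a b : FreeGroup X}
      (p : ((mulCayley (Set.range .of)).deleteEdges {s(v, v * .of x)}).Walk a b) :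
      coeff a = coeff b := by
    induction p with
    | nil => rfl
    | cons hab _ ih => exact (coeff_eq_of_adj hab).trans ih
  rintro ⟨p⟩
  simpa [coeff, foxDerivative_mul_of_left_apply] using coeff_eq_of_walk p

theorem mulCayley_range_of_isTree :
    (mulCayley (Set.range (FreeGroup.of : X → FreeGroup X))).IsTree := by
  refine ⟨mulCayley_connected (FreeGroup.closure_range_of X),
    isAcyclic_iff_forall_adj_isBridge.mpr fun u v huv => ?_⟩
  rcases ((mulCayley_adj _ u v).mp huv).2 with ⟨x, hx⟩ | ⟨x, hx⟩
  · obtain rfl : u * .of x = v := hx ▸ mul_inv_cancel_left u v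
    exact isBridge_iff.mpr (mulCayley_range_of_not_reachable_deleteEdges u x)
  · obtain rfl : v * .of x = u := hx ▸ mul_inv_cancel_left v u
    rw [Sym2.eq_swap]
    exact isBridge_iff.mpr (mulCayley_range_of_not_reachable_deleteEdges v x)

end FreeGroups

section VirtuallyFreeGroups

open SimpleGraph
open scoped Pointwise

variable {G : Type*} [Group G]

theorem exists_finite_forall_inv_mul_mem_of_finiteIndex {F : Type*} [Group F] (ι : F →* G)
    [ι.range.FiniteIndex] :
    ∃ (R : Set G) (f : G → F), R.Finite ∧ ∀ g, (ι (f g))⁻¹ * g ∈ R := by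
  obtain ⟨R, hR, -⟩ := ι.range.exists_isComplement_right 1
  have (g : G) : ∃ w, (ι w)⁻¹ * g ∈ R := by
    obtain ⟨⟨⟨_, w, rfl⟩, r⟩, rfl⟩ := hR.surjective g
    exact ⟨w, by simp⟩
  choose f hf using this
  exact ⟨R, f, hR.finite_right, hf⟩

/-- The map `ι` from the tree of `FreeGroup X` is a quasi-isometry; its coarse inverse sends
`ι w * r`, where `r` is a coset representative, to `w`. -/
theorem exists_hasCoarseMidpoints_mulCayley {X : Type*} [Finite X] {ι : FreeGroup X →* G}
    (hι : Function.Injective ι) [ι.range.FiniteIndex] {S : Set G} (hfin : S.Finite)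
    (hS : Subgroup.closure S = ⊤) : ∃ C, HasCoarseMidpoints (mulCayley S) C := by
  obtain ⟨R, f, hR, hf⟩ := exists_finite_forall_inv_mul_mem_of_finiteIndex ι
  have hΓ := mulCayley_connected hS
  have hT := mulCayley_range_of_isTree (X := X)
  let Q : Set (FreeGroup X) := Set.range .of ∪ (Set.range .of)⁻¹
  have hQ : Q.Finite := (Set.finite_range _).union (Set.finite_range _).inv
  obtain ⟨M, hM⟩ := exists_mulCayley_dist_le hΓ ((hQ.image ι).union hR.inv)
  obtain ⟨L, hL⟩ := exists_mulCayley_dist_le hT.connected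
    (((hR.mul (hfin.union hfin.inv)).mul hR.inv).preimage hι.injOn)
  refine ⟨_, hasCoarseMidpoints_of_isTree (f := f) (h := ι) (L := L) (M := M) hΓ hT
    (fun u v huv => hL _ _ ?_) (fun a b hab => hM _ _ (.inl ?_)) fun v => hM _ _ (.inr ?_)⟩
  · have : ι ((f u)⁻¹ * f v) = (ι (f u))⁻¹ * u * (u⁻¹ * v) * ((ι (f v))⁻¹ * v)⁻¹ := by
      simp [mul_assoc]
    rw [Set.mem_preimage, this]
    exact Set.mul_mem_mul (Set.mul_mem_mul (hf u) (inv_mul_mem_of_mulCayley_adj huv))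
      (Set.inv_mem_inv.mpr (hf v))
  · exact ⟨a⁻¹ * b, inv_mul_mem_of_mulCayley_adj hab, by simp⟩
  · simpa using hf v

theorem exists_isFiniteSubgroupSystem_of_virtuallyFree (hfg : Group.FG G) (hvf : VirtuallyFree G) :
    ∃ 𝓚 : Set (Subgroup G), IsFiniteSubgroupSystem 𝓚 := by
  obtain ⟨S, hS, hfin⟩ := Group.fg_iff.mp hfg
  obtain ⟨H, hH, ⟨hfree⟩⟩ := hvf
  let e := IsFreeGroup.mulEquiv H
  have : Group.FG H := H.fg_of_index_ne_zero
  have : Finite (IsFreeGroup.Generators H) :=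
    finite_of_freeGroup_fg (Group.fg_of_surjective (f := e.symm.toMonoidHom) e.symm.surjective)
  let ι := H.subtype.comp e.toMonoidHom
  have hι : Function.Injective ι := H.subtype_injective.comp e.injective
  have hrange : ι.range = H := by
    rw [MonoidHom.range_comp, MonoidHom.range_eq_top.mpr e.surjective, ← MonoidHom.range_eq_map,
      H.range_subtype]
  have : ι.range.FiniteIndex := hrange.symm ▸ hH
  obtain ⟨C, hC⟩ := exists_hasCoarseMidpoints_mulCayley hι hfin hS
  exact exists_isFiniteSubgroupSystem_of_hasCoarseMidpoints hfin hS hC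

end VirtuallyFreeGroups

section HomClasses

variable {A G G' : Type*} [Group A] [Group G] [Group G']

theorem HomEquiv.refl (φ : G →* G') : HomEquiv φ φ := fun _ _ => ⟨1, by simp⟩

theorem HomEquiv.symm {φ ψ : G →* G'} (h : HomEquiv φ ψ) : HomEquiv ψ φ := fun H hH => by
  obtain ⟨g, hg⟩ := h H hH
  exact ⟨g⁻¹, fun x hx => by simp [hg x hx, mul_assoc]⟩

theorem HomEquiv.trans {φ ψ χ : G →* G'} (h₁ : HomEquiv φ ψ) (h₂ : HomEquiv ψ χ) :
    HomEquiv φ χ := fun H hH => by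
  obtain ⟨g₁, hg₁⟩ := h₁ H hH
  obtain ⟨g₂, hg₂⟩ := h₂ H hH
  exact ⟨g₂ * g₁, fun x hx => by simp [hg₁ x hx, hg₂ x hx, mul_assoc]⟩

theorem HomEquiv.comp_left (φ : G →* G') {α β : A →* G} (h : HomEquiv α β) :
    HomEquiv (φ.comp α) (φ.comp β) := fun H hH => by
  obtain ⟨g, hg⟩ := h H hH
  exact ⟨φ g, fun x hx => by simp [hg x hx]⟩

theorem HomEquiv.comp_right {φ ψ : G →* G'} (h : HomEquiv φ ψ) (α : A →* G) :
    HomEquiv (φ.comp α) (ψ.comp α) := fun H hH => by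
  obtain ⟨g, hg⟩ := h (H.map α) (hH.image α)
  exact ⟨g, fun x hx => hg (α x) (H.mem_map_of_mem α hx)⟩

theorem homEquiv_iff_exists_conj [Finite A] {α β : A →* G} :
    HomEquiv α β ↔ ∃ g, ∀ a, g * α a * g⁻¹ = β a := by
  constructor
  · intro h
    obtain ⟨g, hg⟩ := h ⊤ (Set.toFinite _)
    exact ⟨g, fun a => (hg a (Subgroup.mem_top a)).symm⟩
  · rintro ⟨g, hg⟩ H -
    exact ⟨g, fun a _ => (hg a).symm⟩

variable (A G) in
/-- Equivalence of homomorphisms `A →* G`, as a setoid. -/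
def homSetoid : Setoid (A →* G) :=
  ⟨HomEquiv, HomEquiv.refl, HomEquiv.symm, HomEquiv.trans⟩

variable (A G) in
/-- The homomorphisms `A →* G` up to equivalence; for finite `A`, this is up to conjugation
in `G`. -/
abbrev HomClasses : Type _ := Quotient (homSetoid A G)

/-- The map on classes of homomorphisms given by composition with `φ`. -/
def HomClasses.postcomp (A : Type*) [Group A] (φ : G →* G') : HomClasses A G → HomClasses A G' :=
  Quotient.map φ.comp fun _ _ => HomEquiv.comp_left φ

theorem HomClasses.postcomp_iterate_mk (φ : G →* G) (n : ℕ) (α : A →* G) :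
    (postcomp A φ)^[n] ⟦α⟧ = ⟦(homPow φ n).comp α⟧ := by
  induction n with
  | zero => rfl
  | succ n ih => rw [Function.iterate_succ_apply', ih]; rfl

theorem HomClasses.postcomp_eq_postcomp_iff [Finite A] {φ : G →* G'} {c d : HomClasses A G} :
    postcomp A φ c = postcomp A φ d ↔ ∃ g, ∀ a, g * φ (c.out a) * g⁻¹ = φ (d.out a) := by
  conv_lhs => rw [← c.out_eq, ← d.out_eq]
  exact Quotient.eq.trans homEquiv_iff_exists_conj

theorem ClassPermuting.injective_postcomp {φ : G →* G} (hφ : ClassPermuting φ) :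
    Function.Injective (HomClasses.postcomp A φ) := by
  obtain ⟨k, hk, hφk⟩ := hφ
  obtain ⟨n, rfl⟩ := Nat.exists_eq_add_of_le' hk
  have iterate_eq_id : (HomClasses.postcomp A φ)^[n + 1] = id := by
    ext ⟨α⟩
    exact (HomClasses.postcomp_iterate_mk φ (n + 1) α).trans (Quotient.sound (hφk.comp_right α))
  refine Function.Injective.of_comp (f := (HomClasses.postcomp A φ)^[n]) ?_
  rw [← Function.iterate_succ, iterate_eq_id]
  exact Function.injective_id

namespace IsFiniteSubgroupSystem

variable {𝓚 : Set (Subgroup G)}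

theorem finite_homClasses (h𝓚 : IsFiniteSubgroupSystem 𝓚) [Finite A] :
    Finite (HomClasses A G) := by
  have := h𝓚.finite.to_subtype
  have (B : 𝓚) : Finite (A →* (B : Subgroup G)) :=
    have : Finite (B : Subgroup G) := h𝓚.finite_of_mem B B.2
    .of_injective _ DFunLike.coe_injective
  refine .of_surjective
    (fun β : Σ B : 𝓚, (A →* (B : Subgroup G)) => (⟦(Subgroup.subtype _).comp β.2⟧ : HomClasses A G))
    (Quotient.ind fun α => ?_)
  obtain ⟨B, hB, g, hg⟩ := h𝓚.exists_subgroupConj α.range (Set.finite_range α)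
  have conj_mem (a : A) : g⁻¹ * α a * g ∈ B := by
    obtain ⟨b, hb, hba⟩ : α a ∈ B.map (MulAut.conj g).toMonoidHom := hg ▸ ⟨a, rfl⟩
    rw [← hba]
    simpa [mul_assoc] using hb
  let β : A →* B := ((MulAut.conj g⁻¹).toMonoidHom.comp α).codRestrict B
    fun a => by simpa using conj_mem a
  exact ⟨⟨⟨B, hB⟩, β⟩, Quotient.sound <| homEquiv_iff_exists_conj.mpr
    ⟨g, fun a => by simp [β, mul_assoc]⟩⟩

theorem homEquiv_of_forall_mem (h𝓚 : IsFiniteSubgroupSystem 𝓚) {φ ψ : G →* G'}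
    (h : ∀ A ∈ 𝓚, HomEquiv (φ.comp A.subtype) (ψ.comp A.subtype)) : HomEquiv φ ψ := by
  intro K hK
  obtain ⟨A, hA, g, rfl⟩ := h𝓚.exists_subgroupConj K hK
  have : Finite A := h𝓚.finite_of_mem A hA
  obtain ⟨c, hc⟩ := homEquiv_iff_exists_conj.mp (h A hA)
  refine ⟨ψ g * c * (φ g)⁻¹, ?_⟩
  rintro _ ⟨a, ha, rfl⟩
  have hca : c * φ a * c⁻¹ = ψ a := hc ⟨a, ha⟩
  simp [← hca, mul_assoc]

/-- An injective self-map of the finite set of families of classes, indexed by `𝓚`, returns to the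
family of inclusions. -/
theorem classPermuting_iff_forall_injective_postcomp (h𝓚 : IsFiniteSubgroupSystem 𝓚) {φ : G →* G} :
    ClassPermuting φ ↔ ∀ A : 𝓚, Function.Injective (HomClasses.postcomp (A : Subgroup G) φ) := by
  refine ⟨fun hφ A => hφ.injective_postcomp, fun hφ => ?_⟩
  have := h𝓚.finite.to_subtype
  have (A : 𝓚) : Finite (HomClasses (A : Subgroup G) G) :=
    have : Finite (A : Subgroup G) := h𝓚.finite_of_mem A A.2
    h𝓚.finite_homClasses
  let inclusions (A : 𝓚) : HomClasses (A : Subgroup G) G := ⟦Subgroup.subtype _⟧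
  obtain ⟨n, hn, hper⟩ := Function.mem_periodicPts.mp <|
    (Function.Injective.piMap hφ).mem_periodicPts inclusions
  refine ⟨n, hn, h𝓚.homEquiv_of_forall_mem fun A hA => Quotient.exact (s := homSetoid A G) ?_⟩
  rw [← HomClasses.postcomp_iterate_mk]
  have := congrFun hper ⟨A, hA⟩
  rwa [Pi.map_iterate] at this

end IsFiniteSubgroupSystem

end HomClasses

section Formulas

variable {G G' : Type*} [Group G] [Group G'] {ι : Type*}

/-- A group homomorphism, as a homomorphism of structures for the language of groups. -/
def groupLangHom (φ : G →* G') : G →[groupLang] G' where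
  toFun := φ
  map_fun' f v := by
    cases f with
    | mul => exact map_mul φ _ _
    | inv => exact map_inv φ _
    | one => exact map_one φ
  map_rel' r := r.elim

/-- The product of two terms in the language of groups. -/
def mulTerm (t u : groupLang.Term ι) : groupLang.Term ι :=
  .func GroupFunc.mul ![t, u]

/-- The inverse of a term in the language of groups. -/
def invTerm (t : groupLang.Term ι) : groupLang.Term ι :=
  .func GroupFunc.inv ![t]

@[simp]
theorem realize_mulTerm (v : ι → G) (t u : groupLang.Term ι) :
    (mulTerm t u).realize v = t.realize v * u.realize v :=
  rfl

@[simp]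
theorem realize_invTerm (v : ι → G) (t : groupLang.Term ι) :
    (invTerm t).realize v = (t.realize v)⁻¹ :=
  rfl

theorem exists_term_realize_eq {s : ι → G} {g : G} (hg : g ∈ Subgroup.closure (Set.range s)) :
    ∃ t : groupLang.Term ι, t.realize s = g := by
  induction hg using Subgroup.closure_induction with
  | mem _ h =>
    obtain ⟨i, rfl⟩ := h
    exact ⟨.var i, rfl⟩
  | one => exact ⟨.func GroupFunc.one ![], rfl⟩
  | mul _ _ _ _ ht hu =>
    obtain ⟨t, rfl⟩ := ht
    obtain ⟨u, rfl⟩ := hu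
    exact ⟨mulTerm t u, rfl⟩
  | inv _ _ ht =>
    obtain ⟨t, rfl⟩ := ht
    exact ⟨invTerm t, rfl⟩

theorem exists_term_forall_realize_comp_eq {s : ι → G} (hs : Subgroup.closure (Set.range s) = ⊤)
    (g : G) : ∃ t : groupLang.Term ι, ∀ φ : G →* G', t.realize (φ ∘ s) = φ g := by
  obtain ⟨t, rfl⟩ := exists_term_realize_eq (hs ▸ Subgroup.mem_top g)
  exact ⟨t, fun φ => HomClass.realize_term (groupLangHom φ)⟩

theorem isQF_iInf {L : FirstOrder.Language} {α β : Type*} {n : ℕ} [Finite β]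
    {f : β → L.BoundedFormula α n} (hf : ∀ b, (f b).IsQF) : (BoundedFormula.iInf f).IsQF := by
  dsimp only [BoundedFormula.iInf]
  generalize Finset.toList _ = l
  induction l with
  | nil => exact .top
  | cons b l ih => exact (hf b).inf ih

theorem exists_universal_formula_not_conj {s : ι → G} (hs : Subgroup.closure (Set.range s) = ⊤)
    {I : Type*} [Finite I] {J : I → Type*} [∀ i, Finite (J i)] (u v : ∀ i, J i → G) :
    ∃ θ : groupLang.Formula ι, IsUniversalQF θ ∧ ∀ φ : G →* G,
      (θ.Realize (φ ∘ s) ↔ ∀ i, ¬ ∃ g, ∀ j, g * φ (u i j) * g⁻¹ = φ (v i j)) := by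
  choose t ht using exists_term_forall_realize_comp_eq (G' := G) hs
  let y : groupLang.Term (ι ⊕ Fin 1) := .var (.inr 0)
  let conjEq (i : I) (j : J i) : groupLang.BoundedFormula ι 1 :=
    (mulTerm (mulTerm y ((t (u i j)).relabel .inl)) (invTerm y)).bdEqual ((t (v i j)).relabel .inl)
  refine ⟨(BoundedFormula.iInf fun i => (BoundedFormula.iInf (conjEq i)).not).all,
    .all (.of_isQF (isQF_iInf fun i => (isQF_iInf fun j =>
      (BoundedFormula.IsAtomic.equal _ _).isQF).not)), fun φ => ?_⟩
  have realize_conjEq (i : I) (j : J i) (xs : Fin 1 → G) :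
      (conjEq i j).Realize (φ ∘ s) xs ↔ xs 0 * φ (u i j) * (xs 0)⁻¹ = φ (v i j) := by
    simp [conjEq, y, ht]
  simp only [Formula.Realize, BoundedFormula.realize_all, BoundedFormula.realize_iInf,
    BoundedFormula.realize_not, realize_conjEq, not_exists]
  exact forall_comm

theorem exists_universal_formula_classPermuting_general {𝓚 : Set (Subgroup G)}
    (h𝓚 : IsFiniteSubgroupSystem 𝓚) {s : ι → G} (hs : Subgroup.closure (Set.range s) = ⊤) :
    ∃ θ : groupLang.Formula ι, IsUniversalQF θ ∧
      ∀ φ : G →* G, (θ.Realize (fun i => φ (s i)) ↔ ClassPermuting φ) := by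
  have := h𝓚.finite.to_subtype
  have finite_mem (A : 𝓚) : Finite (A : Subgroup G) := h𝓚.finite_of_mem A A.2
  have (A : 𝓚) : Finite (HomClasses (A : Subgroup G) G) := h𝓚.finite_homClasses
  let I := Σ A : 𝓚, {p : HomClasses (A : Subgroup G) G × HomClasses (A : Subgroup G) G // p.1 ≠ p.2}
  obtain ⟨θ, hθ, hreal⟩ := exists_universal_formula_not_conj hs
    (fun (i : I) a => i.2.1.1.out a) (fun (i : I) a => i.2.1.2.out a)
  refine ⟨θ, hθ, fun φ => (hreal φ).trans ?_⟩
  simp only [← HomClasses.postcomp_eq_postcomp_iff]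
  rw [h𝓚.classPermuting_iff_forall_injective_postcomp]
  exact ⟨fun h A c d hcd => by_contra fun hne => h ⟨A, (c, d), hne⟩ hcd,
    fun h i hi => i.2.2 (h i.1 hi)⟩

end Formulas

/-- There is a universal formula in `n` variables expressing that an endomorphism
of `G` is class-permuting, in terms of the images of a fixed generating tuple. -/
theorem exists_universal_formula_classPermuting
    (G : Type*) [Group G] (hfg : Group.FG G) (hvf : VirtuallyFree G)
    (n : ℕ) (s : Fin n → G) (hs : Subgroup.closure (Set.range s) = ⊤) :
    ∃ θ : groupLang.Formula (Fin n), IsUniversalQF θ ∧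
      ∀ φ : G →* G, (θ.Realize (fun i => φ (s i)) ↔ ClassPermuting φ) := by
  obtain ⟨𝓚, h𝓚⟩ := exists_isFiniteSubgroupSystem_of_virtuallyFree hfg hvf
  exact exists_universal_formula_classPermuting_general h𝓚 hs
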